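/- arXiv:1207.0625 — 2 statements merged into one kernel-verified Lean document; each statement's English description precedes it below -/
import Mathlib

section
/- Let ψ : ℝ → (0,∞) be a continuous probability density with respect to Lebesgue measure satisfying ψ(−s) = ψ(s) for all s ∈ ℝ and ψ(s₁) ≥ ψ(s₂) whenever 0 ≤ s₁ < s₂; for β > 0 set ψ_β(s) := β·ψ(βs). Let h : ℝ → (0,∞) be a strictly positive measurable probability density and X a real-valued random variable whose law has density h with respect to Lebesgue measure. Then (a) the map f ↦ ∫_ℝ sup_{t∈[0,1]} ( |f(t)| · ψ_β(s−t) ) ds is a norm on C([0,1], ℝ), and (b) for every f ∈ C([0,1], ℝ), E[ sup_{t∈[0,1]} |f(t)| · ψ_β(X−t)/h(X) ] = ∫_ℝ sup_{t∈[0,1]} ( |f(t)| · ψ_β(s−t) ) ds, and this quantity is finite. -/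
open MeasureTheory unitInterval

lemma aux_G_cont (ψ : ℝ → ℝ) (hψ_cont : Continuous ψ) (β : ℝ) (f : C(I, ℝ)) :
    Continuous (fun s : ℝ => ⨆ t : I, |f t| * (β * ψ (β * (s - t)))) := by
  have := IsCompact.continuous_sSup (K := (Set.univ : Set I)) isCompact_univ
    (f := fun (s : ℝ) (t : I) => |f t| * (β * ψ (β * (s - t)))) (by
      show Continuous (fun p : ℝ × I => |f p.2| * (β * ψ (β * (p.1 - p.2))))
      fun_prop)
  simpa only [Set.image_univ, sSup_range] using this

lemma aux_bdd (ψ : ℝ → ℝ) (hψ_cont : Continuous ψ) (β : ℝ) (f : C(I, ℝ)) (s : ℝ) :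
    BddAbove (Set.range fun t : I => |f t| * (β * ψ (β * (s - t)))) := by
  have : Continuous (fun t : I => |f t| * (β * ψ (β * (s - t)))) := by fun_prop
  exact (isCompact_range this).bddAbove

lemma aux_bound (ψ : ℝ → ℝ) (hψ_pos : ∀ s, 0 < ψ s)
    (hψ_symm : ∀ s, ψ (-s) = ψ s)
    (hψ_mono : ∀ s₁ s₂ : ℝ, 0 ≤ s₁ → s₁ < s₂ → ψ s₂ ≤ ψ s₁)
    (β : ℝ) (hβ : 0 < β) (s : ℝ) (t : I) :
    ψ (β * (s - t)) ≤ (Set.Icc (0:ℝ) 1).indicator (fun _ => ψ 0) s + ψ (β * s) + ψ (β * (s - 1)) := by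
  have hm : ∀ a b : ℝ, 0 ≤ a → a ≤ b → ψ b ≤ ψ a := by
    intro a b ha hab
    rcases hab.eq_or_lt with h | h
    · rw [h]
    · exact hψ_mono a b ha h
  have h0 : ∀ a, ψ a ≤ ψ 0 := by
    intro a
    rcases le_total 0 a with h | h
    · exact hm 0 a le_rfl h
    · rw [← hψ_symm a]; exact hm 0 (-a) le_rfl (by linarith)
  have p1 := hψ_pos (β * s)
  have p2 := hψ_pos (β * (s - 1))
  have ht0 := t.2.1
  have ht1 := t.2.2
  by_cases hs : s ∈ Set.Icc (0:ℝ) 1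
  · rw [Set.indicator_of_mem hs]
    linarith [h0 (β * (s - t))]
  · rw [Set.indicator_of_notMem hs]
    rcases lt_or_ge s 0 with h | h
    · have := hm (-(β * s)) (-(β * (s - t))) (by nlinarith) (by nlinarith)
      rw [hψ_symm, hψ_symm] at this
      linarith
    · have h1 : 1 < s := by
        by_contra hc
        exact hs ⟨h, not_lt.mp hc⟩
      have := hm (β * (s - 1)) (β * (s - t)) (by nlinarith) (by nlinarith)
      linarith


/-- For a continuous, symmetric, unimodal probability density `ψ > 0`,
`β > 0`, `ψ_β(s) = β ψ(β s)`, a strictly positive density `h` and `X` with density `h`: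
(a) `f ↦ ∫_ℝ sup_t (|f t| ψ_β(s - t)) ds` is a norm on `C([0,1], ℝ)`, and
(b) `E[sup_t |f t| ψ_β(X - t)/h(X)]` equals this quantity, which is finite. -/
theorem D_norm_shifted_density
    {Ω : Type*} [MeasurableSpace Ω] (P : Measure Ω) [IsProbabilityMeasure P]
    (ψ : ℝ → ℝ) (hψ_cont : Continuous ψ) (hψ_pos : ∀ s, 0 < ψ s)
    (hψ_dens : ∫⁻ s, ENNReal.ofReal (ψ s) = 1)
    (hψ_symm : ∀ s, ψ (-s) = ψ s)
    (hψ_mono : ∀ s₁ s₂ : ℝ, 0 ≤ s₁ → s₁ < s₂ → ψ s₂ ≤ ψ s₁)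
    (β : ℝ) (hβ : 0 < β)
    (h : ℝ → ℝ) (hh_meas : Measurable h) (hh_pos : ∀ x, 0 < h x)
    (hh_dens : ∫⁻ x, ENNReal.ofReal (h x) = 1)
    (X : Ω → ℝ) (hX_meas : Measurable X)
    (hX_law : Measure.map X P = volume.withDensity fun x => ENNReal.ofReal (h x))
    (N : C(I, ℝ) → ENNReal)
    (hN : ∀ f, N f = ∫⁻ s, ENNReal.ofReal (⨆ t : I, |f t| * (β * ψ (β * (s - t))))) :
    ((∀ f, N f < ⊤)
      ∧ (∀ (c : ℝ) (f), N (c • f) = ENNReal.ofReal |c| * N f)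
      ∧ (∀ f₁ f₂, N (f₁ + f₂) ≤ N f₁ + N f₂)
      ∧ (∀ f, N f = 0 ↔ f = 0))
    ∧ (∀ f : C(I, ℝ),
        ∫⁻ ω, ENNReal.ofReal (⨆ t : I, |f t| * (β * ψ (β * (X ω - t)) / h (X ω))) ∂P
          = N f ∧ N f < ⊤) := by
  have hβ0 := hβ.ne'
  have nn : ∀ (f : C(I, ℝ)) (s : ℝ) (t : I), 0 ≤ |f t| * (β * ψ (β * (s - t))) := fun f s t =>
    mul_nonneg (abs_nonneg _) (mul_nonneg hβ.le (hψ_pos _).le)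
  have Gnn : ∀ (f : C(I, ℝ)) (s : ℝ), 0 ≤ ⨆ t : I, |f t| * (β * ψ (β * (s - t))) := fun f s =>
    Real.iSup_nonneg (nn f s)
  have hint : Integrable ψ := by
    refine ⟨hψ_cont.aestronglyMeasurable, ?_⟩
    rw [hasFiniteIntegral_iff_ofReal (Filter.Eventually.of_forall fun s => (hψ_pos s).le), hψ_dens]
    exact ENNReal.one_lt_top
  have hfin : ∀ f, N f < ⊤ := by
    intro f
    rw [hN]
    have i1 : Integrable (fun s : ℝ => ψ (β * s)) := hint.comp_mul_left' hβ0
    have i2 : Integrable (fun s : ℝ => ψ (β * (s - 1))) := i1.comp_sub_right 1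
    have i0 : Integrable ((Set.Icc (0:ℝ) 1).indicator (fun _ => ψ 0)) :=
      (integrable_indicator_iff measurableSet_Icc).2 (integrableOn_const (by simp))
    have ig := (((i0.add i1).add i2).const_mul (‖f‖ * β))
    refine lt_of_le_of_lt (lintegral_mono fun s => ENNReal.ofReal_le_ofReal ?_) ig.lintegral_lt_top
    refine ciSup_le fun t => ?_
    have h1 := aux_bound ψ hψ_pos hψ_symm hψ_mono β hβ s t
    have h2 : |f t| ≤ ‖f‖ := f.norm_coe_le_norm t
    have h3 : 0 ≤ β * ψ (β * (s - t)) := mul_nonneg hβ.le (hψ_pos _).le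
    calc |f t| * (β * ψ (β * (s - t))) ≤ ‖f‖ * (β * ψ (β * (s - t))) := by gcongr
      _ = ‖f‖ * β * ψ (β * (s - t)) := by ring
      _ ≤ _ := mul_le_mul_of_nonneg_left h1 (by positivity)
  refine ⟨⟨hfin, ?_, ?_, ?_⟩, fun f => ⟨?_, hfin f⟩⟩
  · intro c f
    rw [hN, hN, ← lintegral_const_mul' _ _ ENNReal.ofReal_ne_top]
    refine lintegral_congr fun s => ?_
    rw [← ENNReal.ofReal_mul (abs_nonneg c), Real.mul_iSup_of_nonneg (abs_nonneg c)]
    simp [abs_mul, mul_assoc]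
  · intro f₁ f₂
    rw [hN, hN, hN, ← lintegral_add_left
      (aux_G_cont ψ hψ_cont β f₁).measurable.ennreal_ofReal]
    refine lintegral_mono fun s => ?_
    beta_reduce
    rw [← ENNReal.ofReal_add (Gnn f₁ s) (Gnn f₂ s)]
    refine ENNReal.ofReal_le_ofReal (ciSup_le fun t => ?_)
    have h1 := le_ciSup (aux_bdd ψ hψ_cont β f₁ s) t
    have h2 := le_ciSup (aux_bdd ψ hψ_cont β f₂ s) t
    have h3 : 0 ≤ β * ψ (β * (s - t)) := mul_nonneg hβ.le (hψ_pos _).le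
    refine le_trans ?_ (add_le_add h1 h2)
    rw [← add_mul]
    exact mul_le_mul_of_nonneg_right (abs_add_le _ _) h3
  · intro f
    constructor
    · intro h0
      have hc := aux_G_cont ψ hψ_cont β f
      rw [hN, lintegral_eq_zero_iff hc.measurable.ennreal_ofReal] at h0
      have h1 := (Continuous.ae_eq_iff_eq volume (ENNReal.continuous_ofReal.comp hc)
        continuous_const).1 h0
      have h2 := congrFun h1 0
      replace h2 := ENNReal.ofReal_eq_zero.1 h2
      ext t
      have h3 := (le_ciSup (aux_bdd ψ hψ_cont β f 0) t).trans h2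
      have h4 : 0 < β * ψ (β * (0 - t)) := mul_pos hβ (hψ_pos _)
      have h5 : |f t| ≤ 0 := nonpos_of_mul_nonpos_left h3 h4
      simpa using h5
    · rintro rfl
      simp [hN]
  · have hc := aux_G_cont ψ hψ_cont β f
    have key : ∀ x : ℝ, (⨆ t : I, |f t| * (β * ψ (β * (x - t)) / h x))
        = (⨆ t : I, |f t| * (β * ψ (β * (x - t)))) * (h x)⁻¹ := by
      intro x
      rw [Real.iSup_mul_of_nonneg (inv_nonneg.2 (hh_pos x).le)]
      simp only [div_eq_mul_inv, mul_assoc]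
    simp only [key]
    have hm : Measurable (fun x : ℝ =>
        ENNReal.ofReal ((⨆ t : I, |f t| * (β * ψ (β * (x - t)))) * (h x)⁻¹)) :=
      ENNReal.measurable_ofReal.comp (hc.measurable.mul hh_meas.inv)
    rw [← lintegral_map hm hX_meas, hX_law,
      lintegral_withDensity_eq_lintegral_mul _ hh_meas.ennreal_ofReal hm, hN]
    refine lintegral_congr fun x => ?_
    simp only [Pi.mul_apply, Function.comp]
    rw [← ENNReal.ofReal_mul (hh_pos x).le]
    congr 1
    have := (hh_pos x).ne'
    rw [mul_comm, mul_assoc, inv_mul_cancel₀ this, mul_one]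
end

section
/- Let g : [0,1] × [0,1] → [0,∞) be a family of spectral densities, i.e. g is jointly measurable and satisfies: (i) for each s ∈ [0,1] the map t ↦ g(s,t) is continuous; (ii) for each t ∈ [0,1] the map s ↦ g(s,t) is a probability density with respect to Lebesgue measure on [0,1] (nonnegative with ∫_0^1 g(s,t) ds = 1); (iii) ∫_0^1 sup_{t∈[0,1]} g(s,t) ds < ∞. Let U be a random variable uniformly distributed on [0,1]. Then the map f ↦ ∫_0^1 sup_{t∈[0,1]} ( |f(t)| · g(s,t) ) ds defines a norm on C([0,1], ℝ), and for every f ∈ C([0,1], ℝ) this quantity equals E[ sup_{t∈[0,1]} |f(t)| · g(U,t) ]. -/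
open MeasureTheory unitInterval

/-- If `g : [0,1] × [0,1] → [0,∞)` is a family of spectral densities and
`U` is uniformly distributed on `[0,1]`, then `f ↦ ∫_0^1 sup_t (|f t| g(s,t)) ds` is a
norm on `C([0,1], ℝ)` and equals `E[sup_t |f t| g(U,t)]` for every `f`. -/
theorem spectral_densities_define_D_norm
    {Ω : Type*} [MeasurableSpace Ω] (P : Measure Ω) [IsProbabilityMeasure P]
    (g : I → I → ℝ)
    (hg_meas : Measurable fun p : I × I => g p.1 p.2)
    (hg_nonneg : ∀ s t, 0 ≤ g s t)
    (hg_cont : ∀ s, Continuous (g s))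
    (hg_dens : ∀ t : I, ∫⁻ s : I, ENNReal.ofReal (g s t) = 1)
    (hg_fin : ∫⁻ s : I, ENNReal.ofReal (⨆ t : I, g s t) < ⊤)
    (U : Ω → I) (hU_meas : Measurable U)
    (hU_law : Measure.map U P = (volume : Measure I))
    (N : C(I, ℝ) → ENNReal)
    (hN : ∀ f, N f = ∫⁻ s : I, ENNReal.ofReal (⨆ t : I, |f t| * g s t)) :
    ((∀ f, N f < ⊤)
      ∧ (∀ (c : ℝ) (f), N (c • f) = ENNReal.ofReal |c| * N f)
      ∧ (∀ f₁ f₂, N (f₁ + f₂) ≤ N f₁ + N f₂)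
      ∧ (∀ f, N f = 0 ↔ f = 0))
    ∧ (∀ f : C(I, ℝ),
        N f = ∫⁻ ω, ENNReal.ofReal (⨆ t : I, |f t| * g (U ω) t) ∂P) := by
  have hc : ∀ (f : C(I, ℝ)) s, Continuous fun t : I => |f t| * g s t := fun f s =>
    (f.continuous.abs).mul (hg_cont s)
  have hb : ∀ (f : C(I, ℝ)) s, BddAbove (Set.range fun t : I => |f t| * g s t) := fun f s =>
    (isCompact_range (hc f s)).bddAbove
  have hbg : ∀ s, BddAbove (Set.range fun t : I => g s t) := fun s =>
    (isCompact_range (hg_cont s)).bddAbove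
  have hle : ∀ (f : C(I, ℝ)) s t, |f t| * g s t ≤ ⨆ t : I, |f t| * g s t := fun f s t =>
    le_ciSup (hb f s) t
  have h0 : ∀ (f : C(I, ℝ)) s, 0 ≤ ⨆ t : I, |f t| * g s t := fun f s =>
    Real.iSup_nonneg fun t => mul_nonneg (abs_nonneg _) (hg_nonneg s t)
  have hmeas : ∀ f : C(I, ℝ), Measurable fun s : I => ⨆ t : I, |f t| * g s t := by
    intro f
    have he : (fun s : I => ⨆ t : I, |f t| * g s t) =
        fun s : I => ⨆ n : ℕ, |f (TopologicalSpace.denseSeq I n)| *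
          g s (TopologicalSpace.denseSeq I n) := by
      funext s
      have hb2 : BddAbove (Set.range fun n : ℕ => |f (TopologicalSpace.denseSeq I n)| *
          g s (TopologicalSpace.denseSeq I n)) := by
        refine (hb f s).mono ?_
        rintro _ ⟨n, rfl⟩
        exact ⟨_, rfl⟩
      apply le_antisymm
      · refine ciSup_le fun t => ?_
        refine (TopologicalSpace.denseRange_denseSeq I).induction_on
          (p := fun t => |f t| * g s t ≤ ⨆ n : ℕ, |f (TopologicalSpace.denseSeq I n)| *
          g s (TopologicalSpace.denseSeq I n)) t ?_ ?_
        · exact isClosed_le (hc f s) continuous_const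
        · intro n
          exact le_ciSup hb2 n
      · exact ciSup_le fun n => hle f s _
    rw [he]
    refine Measurable.iSup fun n => ?_
    exact (hg_meas.comp (measurable_id.prodMk measurable_const)).const_mul _
  have hmeas' : ∀ f : C(I, ℝ),
      Measurable fun s : I => ENNReal.ofReal (⨆ t : I, |f t| * g s t) := fun f =>
    (hmeas f).ennreal_ofReal
  refine ⟨⟨?_, ?_, ?_, ?_⟩, ?_⟩
  · intro f
    rw [hN]
    calc ∫⁻ s : I, ENNReal.ofReal (⨆ t : I, |f t| * g s t)
        ≤ ∫⁻ s : I, ENNReal.ofReal ‖f‖ * ENNReal.ofReal (⨆ t : I, g s t) := by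
          refine lintegral_mono fun s => ?_
          rw [← ENNReal.ofReal_mul (norm_nonneg f)]
          refine ENNReal.ofReal_le_ofReal (ciSup_le fun t => ?_)
          exact mul_le_mul (f.norm_coe_le_norm t) (le_ciSup (hbg s) t) (hg_nonneg s t)
            (norm_nonneg f)
      _ = ENNReal.ofReal ‖f‖ * ∫⁻ s : I, ENNReal.ofReal (⨆ t : I, g s t) :=
          lintegral_const_mul' _ _ ENNReal.ofReal_ne_top
      _ < ⊤ := ENNReal.mul_lt_top ENNReal.ofReal_lt_top hg_fin
  · intro c f
    rw [hN, hN, ← lintegral_const_mul' _ _ ENNReal.ofReal_ne_top]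
    refine lintegral_congr fun s => ?_
    rw [← ENNReal.ofReal_mul (abs_nonneg c), Real.mul_iSup_of_nonneg (abs_nonneg c)]
    simp [abs_mul, mul_assoc]
  · intro f₁ f₂
    rw [hN, hN, hN, ← lintegral_add_left (hmeas' f₁)]
    refine lintegral_mono fun s => ?_
    rw [← ENNReal.ofReal_add (h0 f₁ s) (h0 f₂ s)]
    refine ENNReal.ofReal_le_ofReal (ciSup_le fun t => ?_)
    have h := mul_le_mul_of_nonneg_right (abs_add_le (f₁ t) (f₂ t)) (hg_nonneg s t)
    have h1 := hle f₁ s t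
    have h2 := hle f₂ s t
    rw [add_mul] at h
    exact h.trans (add_le_add h1 h2)
  · intro f
    constructor
    · intro h
      ext t
      have h1 : ENNReal.ofReal |f t| ≤ 0 := by
        calc ENNReal.ofReal |f t|
            = ENNReal.ofReal |f t| * ∫⁻ s : I, ENNReal.ofReal (g s t) := by
              rw [hg_dens, mul_one]
          _ = ∫⁻ s : I, ENNReal.ofReal |f t| * ENNReal.ofReal (g s t) :=
              (lintegral_const_mul' _ _ ENNReal.ofReal_ne_top).symm
          _ ≤ ∫⁻ s : I, ENNReal.ofReal (⨆ t : I, |f t| * g s t) := by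
              refine lintegral_mono fun s => ?_
              rw [← ENNReal.ofReal_mul (abs_nonneg _)]
              exact ENNReal.ofReal_le_ofReal (hle f s t)
          _ = 0 := by rw [← hN, h]
      have h2 : |f t| ≤ 0 := ENNReal.ofReal_eq_zero.1 (le_antisymm h1 bot_le)
      simpa using h2
    · rintro rfl
      rw [hN]
      simp
  · intro f
    rw [hN, ← hU_law, lintegral_map (hmeas' f) hU_meas]
end
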